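/- Let G be a group acting by isometries on a geodesic δ-hyperbolic metric space S. Then every pair of distinct points of the Gromov boundary ∂S satisfies condition (C2) for the induced action of G on ∂S. -/

import Mathlib

/-!
For points `a, b, c, c'` of `S`, the combination
`(a·b) + (c·c') - (a·c) - (b·c')` of Gromov products does not depend on the basepoint, hence is
unchanged when an isometry `g` is applied to the four points (`gprod_cross_isometry`).

Since `x ≠ y`, small neighbourhoods `U ∋ x`, `V ∋ y` give a uniform bound `(u·v) ≤ K` for
`u ∈ U`, `v ∈ V`. Given distinct `p, q, r`, small neighbourhoods `A, B, C` give bounds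
`(a·c) ≤ M₁`, `(b·c') ≤ M₂` and, shrinking `C`, `(c·c') ≥ L` with `L` as large as desired.
If `ga, gc ∈ U` and `gb, gc' ∈ V`, the combination is at most `2K` after applying `g`, and at
least `L - M₁ - M₂` before; for `L > 2K + M₁ + M₂` this is absurd, so the set of such `g` is empty.

Boundary products are only defined up to a bounded error, so all bounds are phrased for arbitrary
sequences tending to the boundary points (`exists_upper_bound`, `exists_lower_bound`). Transferring
them between sequences uses the four-point inequality (`gprod_fourPoint`), deduced from slimness
of triangles.
-/

/-- A geodesic segment from `u` to `v`: the image of an isometric embedding of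
`[0, dist u v]` sending the endpoints to `u` and `v`. -/
def IsGeodesicSegment {S : Type*} [MetricSpace S] (Γ : Set S) (u v : S) : Prop :=
  ∃ γ : ℝ → S, γ 0 = u ∧ γ (dist u v) = v ∧
    (∀ s ∈ Set.Icc (0 : ℝ) (dist u v), ∀ t ∈ Set.Icc (0 : ℝ) (dist u v),
      dist (γ s) (γ t) = |s - t|) ∧
    Γ = γ '' Set.Icc (0 : ℝ) (dist u v)

/-- A geodesic metric space: every pair of points is joined by a geodesic segment. -/
def GeodesicSpace (S : Type*) [MetricSpace S] : Prop :=
  ∀ u v : S, ∃ Γ : Set S, IsGeodesicSegment Γ u v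

/-- `δ`-hyperbolicity: every geodesic triangle is `δ`-slim. -/
def DeltaHyperbolic (S : Type*) [MetricSpace S] (δ : ℝ) : Prop :=
  ∀ x y z : S, ∀ Γ₁ Γ₂ Γ₃ : Set S,
    IsGeodesicSegment Γ₁ x y → IsGeodesicSegment Γ₂ y z → IsGeodesicSegment Γ₃ z x →
    ∀ p ∈ Γ₁, Metric.infDist p (Γ₂ ∪ Γ₃) ≤ δ

/-- A (left) action of a group `G` on a set `M`, given as a plain function. -/
def IsAction {G M : Type*} [Group G] (act : G → M → M) : Prop :=
  (∀ x : M, act 1 x = x) ∧ ∀ (g h : G) (x : M), act (g * h) x = act g (act h x)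

/-- An action by homeomorphisms on a topological space. -/
def IsActionByHomeos {G M : Type*} [Group G] [TopologicalSpace M] (act : G → M → M) : Prop :=
  IsAction act ∧ ∀ g : G, Continuous (act g)

/-- An action by isometries on a metric space. -/
def IsIsometricAction {G S : Type*} [Group G] [MetricSpace S] (act : G → S → S) : Prop :=
  IsAction act ∧ ∀ g : G, Isometry (act g)

theorem IsAction.injective {G M : Type*} [Group G] {act : G → M → M}
    (h : IsAction act) (g : G) : Function.Injective (act g) := by
  intro a b hab
  have h2 := congrArg (act g⁻¹) hab
  rw [← h.2 g⁻¹ g a, ← h.2 g⁻¹ g b, inv_mul_cancel, h.1, h.1] at h2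
  exact h2

/-- The Gromov product of `x` and `y` with respect to the basepoint `e`. -/
noncomputable def gprod {S : Type*} [MetricSpace S] (e x y : S) : ℝ :=
  (dist x e + dist y e - dist x y) / 2

/-- A sequence converges to infinity if its pairwise Gromov products tend to infinity. -/
def ConvToInfty {S : Type*} [MetricSpace S] (e : S) (s : ℕ → S) : Prop :=
  Filter.Tendsto (fun p : ℕ × ℕ => gprod e (s p.1) (s p.2)) Filter.atTop Filter.atTop

/-- The type of sequences in `S` converging to infinity. -/
def BSeq (S : Type*) [MetricSpace S] (e : S) := {s : ℕ → S // ConvToInfty e s}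

/-- Two sequences converging to infinity are equivalent if their mutual Gromov
products tend to infinity. -/
def bequiv {S : Type*} [MetricSpace S] (e : S) (s t : BSeq S e) : Prop :=
  Filter.Tendsto (fun n => gprod e (s.1 n) (t.1 n)) Filter.atTop Filter.atTop

/-- The Gromov boundary of `S` with respect to the basepoint `e`. -/
def GBoundary (S : Type*) [MetricSpace S] (e : S) := Quot (bequiv (S := S) e)

/-- A sequence in `S` tends to the boundary point `x`. -/
def TendstoBd {S : Type*} [MetricSpace S] (e : S) (s : ℕ → S) (x : GBoundary S e) : Prop :=
  ∃ h : ConvToInfty e s, Quot.mk _ (⟨s, h⟩ : BSeq S e) = x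

/-- The Gromov product of a point `u ∈ S` with a boundary point `x`:
the infimum over sequences tending to `x` of the liminf of Gromov products. -/
noncomputable def gprodSB {S : Type*} [MetricSpace S] (e u : S) (x : GBoundary S e) : EReal :=
  sInf {r : EReal | ∃ s : ℕ → S, TendstoBd e s x ∧
    r = Filter.liminf (fun n => (gprod e u (s n) : EReal)) Filter.atTop}

/-- The Gromov product of two boundary points. -/
noncomputable def gprodBB {S : Type*} [MetricSpace S] (e : S) (x y : GBoundary S e) : EReal :=
  sInf {r : EReal | ∃ s t : ℕ → S, TendstoBd e s x ∧ TendstoBd e t y ∧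
    r = Filter.liminf (fun p : ℕ × ℕ => (gprod e (s p.1) (t p.2) : EReal)) Filter.atTop}

/-- `UK e K x = {s ∈ S | (x·s)_e > K}`. -/
def UK {S : Type*} [MetricSpace S] (e : S) (K : ℝ) (x : GBoundary S e) : Set S :=
  {u : S | (K : EReal) < gprodSB e u x}

/-- `d'(x,y) = exp (−ζ (x·y)_e)` on the boundary (equal to `0` when the product is `∞`). -/
noncomputable def dExp {S : Type*} [MetricSpace S] (e : S) (ζ : ℝ) (x y : GBoundary S e) : ℝ :=
  if gprodBB e x y = ⊤ then 0 else Real.exp (-ζ * (gprodBB e x y).toReal)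

/-- The chain metric `ρ(x,y) = inf Σ d'(s_k, s_{k+1})` over finite chains from `x` to `y`. -/
noncomputable def rhoChain {S : Type*} [MetricSpace S] (e : S) (ζ : ℝ)
    (x y : GBoundary S e) : ℝ :=
  sInf {r : ℝ | ∃ (n : ℕ) (c : ℕ → GBoundary S e), c 0 = x ∧ c n = y ∧
    r = ∑ k ∈ Finset.range n, dExp e ζ (c k) (c (k + 1))}

/-- `ρ` is a metric. -/
def IsMetricFn {B : Type*} (ρ : B → B → ℝ) : Prop :=
  (∀ x y, 0 ≤ ρ x y) ∧ (∀ x y, ρ x y = 0 ↔ x = y) ∧ (∀ x y, ρ x y = ρ y x) ∧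
  ∀ x y z, ρ x z ≤ ρ x y + ρ y z

/-- `ζ` is a suitable visual parameter: `ζ > 0`, the associated chain function `ρ` is a
metric on the boundary, and `d'/2 ≤ ρ ≤ d'`. -/
def VisualParam {S : Type*} [MetricSpace S] (e : S) (ζ : ℝ) : Prop :=
  0 < ζ ∧ IsMetricFn (rhoChain e ζ) ∧
  ∀ x y : GBoundary S e, dExp e ζ x y / 2 ≤ rhoChain e ζ x y ∧ rhoChain e ζ x y ≤ dExp e ζ x y

/-- The topology on the Gromov boundary induced by the visual metric `ρ`. -/
noncomputable def bdTopology (S : Type*) [MetricSpace S] (e : S) (ζ : ℝ) :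
    TopologicalSpace (GBoundary S e) :=
  TopologicalSpace.generateFrom
    {B | ∃ (x : GBoundary S e) (ε : ℝ), 0 < ε ∧ B = {y | rhoChain e ζ x y < ε}}

theorem gprod_comp_ge {S : Type*} [MetricSpace S] (e : S) {f : S → S} (hf : Isometry f)
    (a b : S) : gprod e a b - dist (f e) e ≤ gprod e (f a) (f b) := by
  have h1 : dist a e - dist (f e) e ≤ dist (f a) e := by
    have h := dist_triangle (f a) e (f e)
    rw [hf.dist_eq] at h
    have hc := dist_comm e (f e)
    linarith
  have h2 : dist b e - dist (f e) e ≤ dist (f b) e := by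
    have h := dist_triangle (f b) e (f e)
    rw [hf.dist_eq] at h
    have hc := dist_comm e (f e)
    linarith
  have h3 : dist (f a) (f b) = dist a b := hf.dist_eq a b
  simp only [gprod, h3]; linarith

theorem ConvToInfty.comp {S : Type*} [MetricSpace S] {e : S} {f : S → S} (hf : Isometry f)
    {s : ℕ → S} (hs : ConvToInfty e s) : ConvToInfty e (fun n => f (s n)) := by
  have h : Filter.Tendsto (fun p : ℕ × ℕ => gprod e (s p.1) (s p.2) + -dist (f e) e)
      Filter.atTop Filter.atTop := Filter.tendsto_atTop_add_const_right _ _ hs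
  refine Filter.tendsto_atTop_mono (fun p => ?_) h
  have := gprod_comp_ge e hf (s p.1) (s p.2)
  simpa [sub_eq_add_neg] using this

/-- The map induced on the Gromov boundary by an isometry of `S`. -/
def bdMap {S : Type*} [MetricSpace S] (e : S) (f : S → S) (hf : Isometry f) :
    GBoundary S e → GBoundary S e :=
  Quot.map (fun s : BSeq S e => (⟨fun n => f (s.1 n), s.2.comp hf⟩ : BSeq S e))
    (by
      intro s t h
      have h' : Filter.Tendsto (fun n => gprod e (s.1 n) (t.1 n) + -dist (f e) e)
          Filter.atTop Filter.atTop := Filter.tendsto_atTop_add_const_right _ _ h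
      refine Filter.tendsto_atTop_mono (fun n => ?_) h'
      have := gprod_comp_ge e hf (s.1 n) (t.1 n)
      simpa [sub_eq_add_neg] using this)

/-- The induced map on pairs. -/
def pairMap {M : Type*} (f : M → M) (p : M × M) : M × M := (f p.1, f p.2)

/-- Condition (C) for an action on a topological space. -/
def ConditionC {G M : Type*} [TopologicalSpace M] (act : G → M → M) : Prop :=
  ∀ u v : M × M, u.1 = u.2 → v.1 = v.2 → u ≠ v →
    ∃ U V : Set (M × M), IsOpen U ∧ IsOpen V ∧ u ∈ U ∧ v ∈ V ∧
      ∀ a b : M × M, a.1 ≠ a.2 → b.1 ≠ b.2 → a ≠ b →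
        ∃ A B : Set (M × M), IsOpen A ∧ IsOpen B ∧ a ∈ A ∧ b ∈ B ∧
          {g : G | (pairMap (act g) '' A ∩ U).Nonempty ∧
            (pairMap (act g) '' B ∩ V).Nonempty}.Finite

/-- Condition (C₁) for a pair of open sets `U, V`. -/
def CondC1 {G M : Type*} [TopologicalSpace M] (act : G → M → M) (U V : Set M) : Prop :=
  ∀ p q : M, p ≠ q →
    ∃ A B : Set M, IsOpen A ∧ IsOpen B ∧ p ∈ A ∧ q ∈ B ∧
      {g : G | (act g '' A ∩ U).Nonempty ∧ (act g '' A ∩ V).Nonempty ∧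
        (act g '' B ∩ U).Nonempty ∧ (act g '' B ∩ V).Nonempty}.Finite

/-- Condition (C₂) for a pair of open sets `U, V`. -/
def CondC2 {G M : Type*} [TopologicalSpace M] (act : G → M → M) (U V : Set M) : Prop :=
  ∀ p q r : M, p ≠ q → q ≠ r → p ≠ r →
    ∃ A B C : Set M, IsOpen A ∧ IsOpen B ∧ IsOpen C ∧ p ∈ A ∧ q ∈ B ∧ r ∈ C ∧
      {g : G | (act g '' A ∩ U).Nonempty ∧ (act g '' B ∩ V).Nonempty ∧
        (act g '' C ∩ U).Nonempty ∧ (act g '' C ∩ V).Nonempty}.Finite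

/-- Condition (C₃) for a pair of open sets `U, V`. -/
def CondC3 {G M : Type*} [TopologicalSpace M] (act : G → M → M) (U V : Set M) : Prop :=
  ∀ p q r s : M, p ≠ q → p ≠ r → p ≠ s → q ≠ r → q ≠ s → r ≠ s →
    ∃ A B C D : Set M, IsOpen A ∧ IsOpen B ∧ IsOpen C ∧ IsOpen D ∧
      p ∈ A ∧ q ∈ B ∧ r ∈ C ∧ s ∈ D ∧
      {g : G | (act g '' A ∩ U).Nonempty ∧ (act g '' B ∩ U).Nonempty ∧
        (act g '' C ∩ V).Nonempty ∧ (act g '' D ∩ V).Nonempty}.Finite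

/-- Two points `x, y` satisfy (C₁): some open sets `U ∋ x`, `V ∋ y` satisfy (C₁). -/
def PairC1 {G M : Type*} [TopologicalSpace M] (act : G → M → M) (x y : M) : Prop :=
  ∃ U V : Set M, IsOpen U ∧ IsOpen V ∧ x ∈ U ∧ y ∈ V ∧ CondC1 (G := G) act U V

/-- Two points `x, y` satisfy (C₂). -/
def PairC2 {G M : Type*} [TopologicalSpace M] (act : G → M → M) (x y : M) : Prop :=
  ∃ U V : Set M, IsOpen U ∧ IsOpen V ∧ x ∈ U ∧ y ∈ V ∧ CondC2 (G := G) act U V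

/-- Two points `x, y` satisfy (C₃). -/
def PairC3 {G M : Type*} [TopologicalSpace M] (act : G → M → M) (x y : M) : Prop :=
  ∃ U V : Set M, IsOpen U ∧ IsOpen V ∧ x ∈ U ∧ y ∈ V ∧ CondC3 (G := G) act U V

/-- `g` has north–south dynamics on `M` with fixed points `x ≠ y`. -/
def NorthSouthAt {G M : Type*} [Group G] [TopologicalSpace M] (act : G → M → M)
    (g : G) (x y : M) : Prop :=
  x ≠ y ∧ (∀ z : M, act g z = z ↔ z = x ∨ z = y) ∧
  ∀ U V : Set M, IsOpen U → IsOpen V → x ∈ U → y ∈ V →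
    ∃ N : ℕ, ∀ n : ℕ, N < n → act (g ^ n) '' Uᶜ ⊆ V

/-- `g` has north–south dynamics on `M`. -/
def NorthSouth {G M : Type*} [Group G] [TopologicalSpace M] (act : G → M → M) (g : G) : Prop :=
  ∃ x y : M, NorthSouthAt act g x y

/-- A completely Hausdorff space: distinct points are separated by open sets with
disjoint closures. -/
def CompletelyHausdorff (M : Type*) [TopologicalSpace M] : Prop :=
  ∀ u v : M, u ≠ v → ∃ U V : Set M, IsOpen U ∧ IsOpen V ∧ u ∈ U ∧ v ∈ V ∧
    closure U ∩ closure V = ∅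

open Filter Topology

/-! ### The four-point inequality from slim triangles -/

theorem IsGeodesicSegment.dist_add {S : Type*} [MetricSpace S] {Γ : Set S} {u v p : S}
    (h : IsGeodesicSegment Γ u v) (hp : p ∈ Γ) : dist u p + dist p v = dist u v := by
  obtain ⟨γ, h0, h1, hd, rfl⟩ := h
  obtain ⟨t, ht, rfl⟩ := hp
  have a := hd 0 ⟨le_rfl, dist_nonneg⟩ t ht
  have b := hd t ht (dist u v) ⟨dist_nonneg, le_rfl⟩
  rw [h0, zero_sub, abs_neg, abs_of_nonneg ht.1] at a
  rw [h1, abs_of_nonpos (by linarith [ht.2])] at b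
  linarith

theorem IsGeodesicSegment.left_mem {S : Type*} [MetricSpace S] {Γ : Set S} {u v : S}
    (h : IsGeodesicSegment Γ u v) : u ∈ Γ := by
  obtain ⟨γ, h0, h1, hd, rfl⟩ := h
  exact ⟨0, ⟨le_rfl, dist_nonneg⟩, h0⟩

theorem IsGeodesicSegment.right_mem {S : Type*} [MetricSpace S] {Γ : Set S} {u v : S}
    (h : IsGeodesicSegment Γ u v) : v ∈ Γ := by
  obtain ⟨γ, h0, h1, hd, rfl⟩ := h
  exact ⟨_, ⟨dist_nonneg, le_rfl⟩, h1⟩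

theorem IsGeodesicSegment.isPreconnected {S : Type*} [MetricSpace S] {Γ : Set S} {u v : S}
    (h : IsGeodesicSegment Γ u v) : IsPreconnected Γ := by
  obtain ⟨γ, h0, h1, hd, rfl⟩ := h
  refine isPreconnected_Icc.image γ ?_
  have hl : LipschitzOnWith 1 γ (Set.Icc 0 (dist u v)) :=
    LipschitzOnWith.of_dist_le_mul fun s hs t ht => by
      rw [hd s hs t ht, Real.dist_eq]; simp
  exact hl.continuousOn

theorem gprod_le_dist_of_mem {S : Type*} [MetricSpace S] {Γ : Set S} {u v p : S} (e : S)
    (h : IsGeodesicSegment Γ u v) (hp : p ∈ Γ) : gprod e u v ≤ dist e p := by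
  have h1 := h.dist_add hp
  have h2 := dist_triangle u p e
  have h3 := dist_triangle v p e
  rw [dist_comm v p] at h3
  rw [dist_comm p e] at h2 h3
  unfold gprod
  linarith

theorem gprod_comm {S : Type*} [MetricSpace S] (e u v : S) : gprod e u v = gprod e v u := by
  unfold gprod
  rw [dist_comm u v]
  ring

theorem gprod_nonneg {S : Type*} [MetricSpace S] (e u v : S) : 0 ≤ gprod e u v := by
  have := dist_triangle_right u v e
  unfold gprod
  linarith

/-- Slimness with an honest nearby point; the `1` makes up for the infimum not being attained. -/
theorem exists_near {S : Type*} [MetricSpace S] {δ : ℝ} (hhyp : DeltaHyperbolic S δ)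
    {x y z : S} {Γ₁ Γ₂ Γ₃ : Set S} (h₁ : IsGeodesicSegment Γ₁ x y)
    (h₂ : IsGeodesicSegment Γ₂ y z) (h₃ : IsGeodesicSegment Γ₃ z x) {p : S} (hp : p ∈ Γ₁) :
    (∃ q ∈ Γ₂, dist p q < δ + 1) ∨ ∃ q ∈ Γ₃, dist p q < δ + 1 := by
  have h := hhyp x y z Γ₁ Γ₂ Γ₃ h₁ h₂ h₃ p hp
  have h' : Metric.infDist p (Γ₂ ∪ Γ₃) < δ + 1 := by linarith
  rw [Metric.infDist_lt_iff ⟨y, Or.inl h₂.left_mem⟩] at h'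
  obtain ⟨q, hq | hq, hd⟩ := h'
  exacts [Or.inl ⟨q, hq, hd⟩, Or.inr ⟨q, hq, hd⟩]

/-- The distance from `e` to a geodesic `[u, v]` exceeds the Gromov product by at most a constant:
by connectedness some point of `[u, v]` is close to both other sides of the triangle `e, u, v`. -/
theorem exists_mem_dist_le {S : Type*} [MetricSpace S] {δ : ℝ} (hδ : 0 ≤ δ)
    (hgeo : GeodesicSpace S) (hhyp : DeltaHyperbolic S δ) (e : S) {u v : S} {Γ : Set S}
    (h : IsGeodesicSegment Γ u v) : ∃ p ∈ Γ, dist e p ≤ gprod e u v + 2 * (δ + 1) := by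
  obtain ⟨Γ₂, h₂⟩ := hgeo v e
  obtain ⟨Γ₃, h₃⟩ := hgeo e u
  have hopen : ∀ Δ : Set S, IsOpen {p | Metric.infDist p Δ < δ + 1} := fun Δ =>
    isOpen_lt (Metric.continuous_infDist_pt Δ) continuous_const
  have hne₂ : Γ₂.Nonempty := ⟨_, h₂.left_mem⟩
  have hne₃ : Γ₃.Nonempty := ⟨_, h₃.left_mem⟩
  obtain ⟨p, hp, hp₂, hp₃⟩ := h.isPreconnected _ _ (hopen Γ₂) (hopen Γ₃)
    (fun p hp => by
      rcases exists_near hhyp h h₂ h₃ hp with ⟨q, hq, hd⟩ | ⟨q, hq, hd⟩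
      · exact Or.inl ((Metric.infDist_lt_iff hne₂).2 ⟨q, hq, hd⟩)
      · exact Or.inr ((Metric.infDist_lt_iff hne₃).2 ⟨q, hq, hd⟩))
    ⟨v, h.right_mem, (Metric.infDist_lt_iff hne₂).2 ⟨v, h₂.left_mem, by simp; linarith⟩⟩
    ⟨u, h.left_mem, (Metric.infDist_lt_iff hne₃).2 ⟨u, h₃.right_mem, by simp; linarith⟩⟩
  obtain ⟨q, hq, hpq⟩ := (Metric.infDist_lt_iff hne₂).1 hp₂
  obtain ⟨q', hq', hpq'⟩ := (Metric.infDist_lt_iff hne₃).1 hp₃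
  refine ⟨p, hp, ?_⟩
  have e1 := h.dist_add hp
  have e2 := h₂.dist_add hq
  have e3 := h₃.dist_add hq'
  have t1 := dist_triangle e q p
  have t2 := dist_triangle v q p
  have t3 := dist_triangle e q' p
  have t4 := dist_triangle u q' p
  simp only [gprod, dist_comm] at *
  linarith

/-- The four-point inequality `min (x·y) (y·z) ≤ (x·z) + 3 (δ + 1)`. -/
theorem gprod_fourPoint {S : Type*} [MetricSpace S] {δ : ℝ} (hδ : 0 ≤ δ)
    (hgeo : GeodesicSpace S) (hhyp : DeltaHyperbolic S δ) (e x y z : S) :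
    min (gprod e x y) (gprod e y z) ≤ gprod e x z + 3 * (δ + 1) := by
  obtain ⟨Γ₁, h₁⟩ := hgeo x z
  obtain ⟨Γ₂, h₂⟩ := hgeo z y
  obtain ⟨Γ₃, h₃⟩ := hgeo y x
  obtain ⟨p, hp, hpe⟩ := exists_mem_dist_le hδ hgeo hhyp e h₁
  rcases exists_near hhyp h₁ h₂ h₃ hp with ⟨q, hq, hd⟩ | ⟨q, hq, hd⟩
  · have := gprod_le_dist_of_mem e h₂ hq
    rw [gprod_comm] at this
    refine (min_le_right _ _).trans ?_
    linarith [dist_triangle e p q]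
  · have := gprod_le_dist_of_mem e h₃ hq
    rw [gprod_comm] at this
    refine (min_le_left _ _).trans ?_
    linarith [dist_triangle e p q]

/-- `FourPoint e D`: the four-point inequality at basepoint `e` with additive constant `D`. -/
def FourPoint {S : Type*} [MetricSpace S] (e : S) (D : ℝ) : Prop :=
  ∀ x y z : S, min (gprod e x y) (gprod e y z) ≤ gprod e x z + D

/-- A bound on `(a·d)` bounds `(b·c)` when `a, b` and `c, d` are respectively close. -/
theorem FourPoint.middle_le {S : Type*} [MetricSpace S] {e : S} {D : ℝ} (hF : FourPoint e D)
    {a b c d : S} {K : ℝ} (had : gprod e a d ≤ K) (hab : K + 2 * D < gprod e a b)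
    (hcd : K + 2 * D < gprod e c d) (hD : 0 ≤ D) : gprod e b c ≤ K + 2 * D := by
  have h1 : gprod e b d ≤ K + D := by
    rcases min_le_iff.1 (hF a b d) with h | h <;> linarith
  rcases min_le_iff.1 (hF b c d) with h | h <;> linarith

/-! ### Gromov products along sequences tending to boundary points -/

theorem bequiv_equivalence {S : Type*} [MetricSpace S] {e : S} {D : ℝ} (hF : FourPoint e D) :
    Equivalence (bequiv (S := S) e) where
  refl s := by
    exact Tendsto.comp (show Tendsto _ _ _ from s.2) tendsto_atTop_diagonal
  symm {s t} h := by
    refine Tendsto.congr (fun n => ?_) h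
    exact gprod_comm _ _ _
  trans {s t u} h h' := by
    unfold bequiv at *
    rw [tendsto_atTop] at *
    intro b
    filter_upwards [h (b + D), h' (b + D)] with n h1 h2
    have := (le_min h1 h2).trans (hF (s.1 n) (t.1 n) (u.1 n))
    linarith

theorem tendsto_of_same_limit {S : Type*} [MetricSpace S] {e : S} {D : ℝ} (hF : FourPoint e D)
    {x : GBoundary S e} {s t : ℕ → S} (hs : TendstoBd e s x) (ht : TendstoBd e t x) :
    Tendsto (fun p : ℕ × ℕ => gprod e (s p.1) (t p.2)) atTop atTop := by
  obtain ⟨hs, rfl⟩ := hs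
  obtain ⟨ht, hst⟩ := ht
  have h : bequiv e ⟨t, ht⟩ ⟨s, hs⟩ :=
    (bequiv_equivalence hF).eqvGen_iff.1 (Quot.eqvGen_exact hst)
  have h := (bequiv_equivalence hF).symm h
  unfold bequiv at h
  unfold ConvToInfty at hs
  rw [tendsto_atTop] at *
  intro b
  -- `(s i · t j)` is compared with `(s i · s j)` and `(s j · t j)`.
  have h2 := (tendsto_snd (f := (atTop : Filter ℕ)) (g := (atTop : Filter ℕ))).eventually
    (h (b + D))
  rw [prod_atTop_atTop_eq] at h2
  filter_upwards [hs (b + D), h2] with p h1 h2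
  have := (le_min h1 h2).trans (hF (s p.1) (s p.2) (t p.2))
  linarith

/-- A strict lower bound on the boundary product holds eventually along any sequences. -/
theorem eventually_lt_gprod {S : Type*} [MetricSpace S] {e : S} {x y : GBoundary S e} {L : ℝ}
    (h : (L : EReal) < gprodBB e x y) {s t : ℕ → S} (hs : TendstoBd e s x)
    (ht : TendstoBd e t y) : ∀ᶠ p : ℕ × ℕ in atTop, L < gprod e (s p.1) (t p.2) := by
  have h' : (L : EReal) <
      liminf (fun p : ℕ × ℕ => (gprod e (s p.1) (t p.2) : EReal)) atTop :=
    h.trans_le (sInf_le ⟨s, t, hs, ht, rfl⟩)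
  filter_upwards [eventually_lt_of_lt_liminf h'] with p hp
  exact_mod_cast hp

/-- An upper bound on the boundary product, an infimum over sequences, holds along all sequences
up to a bounded error. -/
theorem eventually_gprod_le {S : Type*} [MetricSpace S] {e : S} {D : ℝ} (hF : FourPoint e D)
    (hD : 0 ≤ D) {x y : GBoundary S e} {K : ℝ}
    (h : gprodBB e x y < (K : EReal)) {s t : ℕ → S} (hs : TendstoBd e s x)
    (ht : TendstoBd e t y) : ∀ᶠ n : ℕ in atTop, gprod e (s n) (t n) ≤ K + 2 * D := by
  obtain ⟨_, ⟨s', t', hs', ht', rfl⟩, hlt⟩ := sInf_lt_iff.1 h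
  have hfr := frequently_lt_of_liminf_lt (by isBoundedDefault) hlt
  obtain ⟨a, ha⟩ := eventually_atTop.1
    ((tendsto_of_same_limit hF hs' hs).eventually (eventually_gt_atTop (K + 2 * D)))
  obtain ⟨b, hb⟩ := eventually_atTop.1
    ((tendsto_of_same_limit hF ht ht').eventually (eventually_gt_atTop (K + 2 * D)))
  obtain ⟨⟨k, l⟩, hkl, hg⟩ := frequently_atTop.1 hfr (a.1, b.2)
  have hg' : gprod e (s' k) (t' l) < K := by exact_mod_cast hg
  filter_upwards [eventually_ge_atTop a.2, eventually_ge_atTop b.1] with n h1 h2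
  exact hF.middle_le hg'.le (ha (k, n) ⟨hkl.1, h1⟩) (hb (n, l) ⟨h2, hkl.2⟩) hD

theorem exists_tendstoBd {S : Type*} [MetricSpace S] {e : S} (x : GBoundary S e) :
    ∃ s, TendstoBd e s x := by
  obtain ⟨s, rfl⟩ := Quot.exists_rep x
  exact ⟨s.1, s.2, rfl⟩

theorem TendstoBd.map {S : Type*} [MetricSpace S] {e : S} {x : GBoundary S e} {s : ℕ → S}
    (h : TendstoBd e s x) {f : S → S} (hf : Isometry f) :
    TendstoBd e (fun n => f (s n)) (bdMap e f hf x) := by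
  obtain ⟨h, rfl⟩ := h
  exact ⟨h.comp hf, rfl⟩

theorem eventually_diag {P : ℕ × ℕ → Prop} (h : ∀ᶠ p in atTop, P p) :
    ∀ᶠ n in atTop, P (n, n) :=
  tendsto_atTop_diagonal.eventually h

/-! ### Uniform bounds on balls of the visual metric -/

theorem gprodBB_ne_top {S : Type*} [MetricSpace S] {e : S} {ζ : ℝ} (hζ : VisualParam e ζ)
    {x y : GBoundary S e} (h : x ≠ y) : gprodBB e x y ≠ ⊤ := by
  intro ht
  have h1 := (hζ.2.2 x y).2
  rw [dExp, if_pos ht] at h1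
  exact h ((hζ.2.1.2.1 x y).1 (le_antisymm h1 (hζ.2.1.1 x y)))

theorem lt_gprodBB_of_rho_lt {S : Type*} [MetricSpace S] {e : S} {ζ : ℝ} (hζ : VisualParam e ζ)
    {x a : GBoundary S e} {L : ℝ} (hL : 0 ≤ L)
    (h : rhoChain e ζ x a < Real.exp (-ζ * L) / 2) : (L : EReal) < gprodBB e x a := by
  by_cases ht : gprodBB e x a = ⊤
  · rw [ht]; exact EReal.coe_lt_top L
  have h1 := (hζ.2.2 x a).1
  rw [dExp, if_neg ht] at h1
  have h2 : Real.exp (-ζ * (gprodBB e x a).toReal) < Real.exp (-ζ * L) := by linarith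
  rw [Real.exp_lt_exp] at h2
  have h3 : L < (gprodBB e x a).toReal := by
    have := hζ.1
    nlinarith
  have hb : gprodBB e x a ≠ ⊥ := by
    -- Otherwise the junk value `toReal ⊥ = 0` contradicts `0 ≤ L`.
    intro hb
    rw [hb, EReal.toReal_bot] at h3
    linarith
  rw [← EReal.coe_toReal ht hb]
  exact_mod_cast h3

theorem exists_upper_bound {S : Type*} [MetricSpace S] {e : S} {D : ℝ} (hF : FourPoint e D)
    (hD : 0 ≤ D) {ζ : ℝ} (hζ : VisualParam e ζ) {x y : GBoundary S e} (hxy : x ≠ y) :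
    ∃ K ε : ℝ, 0 < ε ∧ ∀ a b : GBoundary S e, rhoChain e ζ x a < ε → rhoChain e ζ y b < ε →
      ∀ s t : ℕ → S, TendstoBd e s a → TendstoBd e t b →
        ∀ᶠ n in atTop, gprod e (s n) (t n) ≤ K := by
  obtain ⟨K₀, hK₀, -⟩ := EReal.lt_iff_exists_real_btwn.1 (gprodBB_ne_top hζ hxy).lt_top
  have hL : 0 ≤ |K₀| + 2 * D + 2 * D := by positivity
  refine ⟨|K₀| + 2 * D + 2 * D, Real.exp (-ζ * (|K₀| + 2 * D + 2 * D)) / 2, by positivity, ?_⟩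
  intro a b ha hb s t hs ht
  obtain ⟨u, hu⟩ := exists_tendstoBd x
  obtain ⟨v, hv⟩ := exists_tendstoBd y
  have hK : gprodBB e x y < ((|K₀| : ℝ) : EReal) :=
    hK₀.trans_le (by exact_mod_cast le_abs_self K₀)
  filter_upwards [eventually_gprod_le hF hD hK hu hv,
    eventually_diag (eventually_lt_gprod (lt_gprodBB_of_rho_lt hζ hL ha) hu hs),
    eventually_diag (eventually_lt_gprod (lt_gprodBB_of_rho_lt hζ hL hb) hv ht)] with n h1 h2 h3
  rw [gprod_comm] at h3
  exact hF.middle_le h1 h2 h3 hD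

theorem exists_lower_bound {S : Type*} [MetricSpace S] {e : S} {D : ℝ} (hF : FourPoint e D)
    {ζ : ℝ} (hζ : VisualParam e ζ) (r : GBoundary S e) (L : ℝ) :
    ∃ ε : ℝ, 0 < ε ∧ ∀ c c' : GBoundary S e, rhoChain e ζ r c < ε → rhoChain e ζ r c' < ε →
      ∀ s t : ℕ → S, TendstoBd e s c → TendstoBd e t c' →
        ∀ᶠ n in atTop, L ≤ gprod e (s n) (t n) := by
  have hL : 0 ≤ |L + D| := abs_nonneg _
  refine ⟨Real.exp (-ζ * |L + D|) / 2, by positivity, ?_⟩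
  intro c c' hc hc' s t hs ht
  obtain ⟨u, hu⟩ := exists_tendstoBd r
  filter_upwards [
    eventually_diag (eventually_lt_gprod (lt_gprodBB_of_rho_lt hζ hL hc) hu hs),
    eventually_diag (eventually_lt_gprod (lt_gprodBB_of_rho_lt hζ hL hc') hu ht)] with n h1 h2
  rw [gprod_comm] at h1
  have := (le_min h1.le h2.le).trans (hF (s n) (u n) (t n))
  linarith [le_abs_self (L + D)]

/-! ### Condition (C₂) -/

theorem gprod_cross_isometry {S : Type*} [MetricSpace S] (e : S) {f : S → S} (hf : Isometry f)
    (a b c c' : S) :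
    gprod e (f a) (f b) + gprod e (f c) (f c') - gprod e (f a) (f c) - gprod e (f b) (f c') =
      gprod e a b + gprod e c c' - gprod e a c - gprod e b c' := by
  simp only [gprod, hf.dist_eq]
  ring

theorem isOpen_rho_ball {S : Type*} [MetricSpace S] (e : S) (ζ : ℝ) (x : GBoundary S e) {ε : ℝ}
    (hε : 0 < ε) : IsOpen[bdTopology S e ζ] {y | rhoChain e ζ x y < ε} :=
  TopologicalSpace.isOpen_generateFrom_of_mem ⟨x, ε, hε, rfl⟩

/-- For an isometric action of `G` on a geodesic `δ`-hyperbolic space,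
every pair of distinct boundary points satisfies condition (C₂) for the induced action
on the Gromov boundary. -/
theorem statement12 {G S : Type*} [Group G] [MetricSpace S] (δ : ℝ) (hδ : 0 ≤ δ)
    (hgeo : GeodesicSpace S) (hhyp : DeltaHyperbolic S δ)
    {act : G → S → S} (hact : IsIsometricAction act)
    (e : S) (ζ : ℝ) (hζ : VisualParam e ζ)
    (x y : GBoundary S e) (hxy : x ≠ y) :
    @PairC2 G (GBoundary S e) (bdTopology S e ζ)
      (fun g => bdMap e (act g) (hact.2 g)) x y := by
  have hF : FourPoint e (3 * (δ + 1)) := gprod_fourPoint hδ hgeo hhyp e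
  have hD : 0 ≤ 3 * (δ + 1) := by positivity
  have hself : ∀ (z : GBoundary S e) {ε : ℝ}, 0 < ε → rhoChain e ζ z z < ε := fun z ε hε => by
    rwa [(hζ.2.1.2.1 z z).2 rfl]
  obtain ⟨K, ε, hε, hK⟩ := exists_upper_bound hF hD hζ hxy
  refine ⟨{z | rhoChain e ζ x z < ε}, {z | rhoChain e ζ y z < ε},
    isOpen_rho_ball e ζ x hε, isOpen_rho_ball e ζ y hε, hself x hε, hself y hε, ?_⟩
  intro p q r _ hqr hpr
  obtain ⟨M₁, ε₁, hε₁, hM₁⟩ := exists_upper_bound hF hD hζ hpr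
  obtain ⟨M₂, ε₂, hε₂, hM₂⟩ := exists_upper_bound hF hD hζ hqr
  obtain ⟨ε₃, hε₃, hL⟩ := exists_lower_bound hF hζ r (M₁ + M₂ + 2 * K + 1)
  have hε' : 0 < min ε₁ (min ε₂ ε₃) := by positivity
  refine ⟨{z | rhoChain e ζ p z < ε₁}, {z | rhoChain e ζ q z < ε₂},
    {z | rhoChain e ζ r z < min ε₁ (min ε₂ ε₃)}, isOpen_rho_ball e ζ p hε₁, isOpen_rho_ball e ζ q hε₂,
    isOpen_rho_ball e ζ r hε', hself p hε₁, hself q hε₂, hself r hε', ?_⟩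
  convert Set.finite_empty
  rw [Set.eq_empty_iff_forall_notMem]
  rintro g ⟨⟨_, ⟨a, ha, rfl⟩, haU⟩, ⟨_, ⟨b, hb, rfl⟩, hbV⟩, ⟨_, ⟨c, hc, rfl⟩, hcU⟩,
    ⟨_, ⟨c', hc', rfl⟩, hcV⟩⟩
  simp only [Set.mem_ofPred_eq, lt_min_iff] at ha hb hc hc' haU hbV hcU hcV
  obtain ⟨sa, hsa⟩ := exists_tendstoBd a
  obtain ⟨sb, hsb⟩ := exists_tendstoBd b
  obtain ⟨sc, hsc⟩ := exists_tendstoBd c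
  obtain ⟨sc', hsc'⟩ := exists_tendstoBd c'
  have hg := hact.2 g
  obtain ⟨n, h1, h2, h3, h4, h5⟩ := ((hK _ _ haU hbV _ _ (hsa.map hg) (hsb.map hg)).and
    ((hK _ _ hcU hcV _ _ (hsc.map hg) (hsc'.map hg)).and
    ((hM₁ _ _ ha hc.1 _ _ hsa hsc).and
    ((hM₂ _ _ hb hc'.2.1 _ _ hsb hsc').and
    (hL _ _ hc.2.2 hc'.2.2 _ _ hsc hsc'))))).exists
  have hcross := gprod_cross_isometry e hg (sa n) (sb n) (sc n) (sc' n)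
  linarith [gprod_nonneg e (act g (sa n)) (act g (sc n)),
    gprod_nonneg e (act g (sb n)) (act g (sc' n)), gprod_nonneg e (sa n) (sb n)]
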